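/- Let F : ℝ^m → ℝ be twice continuously differentiable with bounded first and second derivatives, let a ∈ ℝ^m with ∇F(a) ≠ 0, and let L > 0. Then there exists C > 0 such that for all sufficiently small h > 0, 0 ≤ max_{|u| ≤ hL} F(a + u) − F(a + hL·∇F(a)/|∇F(a)|) ≤ C h². -/

import Mathlib

noncomputable section

/-!
On the ball of radius `r = h * L`, Taylor's formula gives `F (a + u) = F a + ⟪∇F a, u⟫ + O(r²)`
uniformly in `u`, the error being at most `M * r ^ 2`. By Cauchy–Schwarz the linear term is at most
`‖∇F a‖ * r`, and the step `u = r • ∇F a / ‖∇F a‖` attains this value. Hence that step is within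
`2 * M * r ^ 2` of the maximum.
-/

theorem abs_taylor_one_le {E : Type*} [NormedAddCommGroup E] [NormedSpace ℝ E]
    {F : E → ℝ} (hF : ContDiff ℝ 2 F) {M : ℝ} (hM : 0 ≤ M)
    (hM2 : ∀ x, ‖fderiv ℝ (fderiv ℝ F) x‖ ≤ M) (a u : E) {r : ℝ} (hu : ‖u‖ ≤ r) :
    |F (a + u) - F a - fderiv ℝ F a u| ≤ M * r ^ 2 := by
  have hr : 0 ≤ r := (norm_nonneg u).trans hu
  have hd : Differentiable ℝ (fderiv ℝ F) :=
    (hF.fderiv_right (m := 1) (by norm_num)).differentiable (by norm_num)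
  have hlip : ∀ x, ‖fderiv ℝ F x - fderiv ℝ F a‖ ≤ M * ‖x - a‖ := fun x =>
    convex_univ.norm_image_sub_le_of_norm_fderiv_le (fun y _ => hd y) (fun y _ => hM2 y)
      (Set.mem_univ a) (Set.mem_univ x)
  have key := (convex_closedBall a r).norm_image_sub_le_of_norm_fderiv_le' (𝕜 := ℝ) (f := F)
    (C := M * r) (φ := fderiv ℝ F a) (x := a) (y := a + u)
    (fun y _ => hF.differentiable (by norm_num) y)
    (fun y hy => (hlip y).trans
      (mul_le_mul_of_nonneg_left (by simpa [dist_eq_norm] using hy) hM))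
    (Metric.mem_closedBall_self hr) (by simpa [dist_eq_norm] using hu)
  rw [add_sub_cancel_left, Real.norm_eq_abs] at key
  calc _ ≤ M * r * ‖u‖ := key
    _ ≤ M * r * r := by gcongr
    _ = M * r ^ 2 := by ring

theorem gradient_step_approx_max {m : ℕ}
    (F : EuclideanSpace ℝ (Fin m) → ℝ) (hF : ContDiff ℝ 2 F)
    (M : ℝ) (hM1 : ∀ x, ‖fderiv ℝ F x‖ ≤ M)
    (hM2 : ∀ x, ‖fderiv ℝ (fderiv ℝ F) x‖ ≤ M)
    (a : EuclideanSpace ℝ (Fin m)) (ha : gradient F a ≠ 0)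
    (L : ℝ) (hL : 0 < L) :
    ∃ C > 0, ∃ h₀ > 0, ∀ h : ℝ, 0 < h → h ≤ h₀ →
      0 ≤ sSup ((fun u => F (a + u)) '' Metric.closedBall 0 (h * L)) -
          F (a + (h * L / ‖gradient F a‖) • gradient F a) ∧
      sSup ((fun u => F (a + u)) '' Metric.closedBall 0 (h * L)) -
          F (a + (h * L / ‖gradient F a‖) • gradient F a) ≤ C * h ^ 2 := by
  have hM : 0 ≤ M := (norm_nonneg _).trans (hM1 a)
  have hg : 0 < ‖gradient F a‖ := norm_pos_iff.mpr ha
  have hgrad : ∀ u, fderiv ℝ F a u = inner ℝ (gradient F a) u := fun u => by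
    simp [gradient]
  -- The summand `1` only keeps the constant positive when `M = 0`.
  refine ⟨2 * M * L ^ 2 + 1, by positivity, 1, one_pos, fun h hh _ => ?_⟩
  have hr : 0 < h * L := by positivity
  set v := (h * L / ‖gradient F a‖) • gradient F a with hv
  have hvn : ‖v‖ = h * L := by
    rw [hv, norm_smul, Real.norm_of_nonneg (by positivity)]
    field_simp
  have hDv : fderiv ℝ F a v = ‖gradient F a‖ * (h * L) := by
    rw [hgrad, hv, inner_smul_right, real_inner_self_eq_norm_sq]
    field_simp
  have hle : ∀ y ∈ (fun u => F (a + u)) '' Metric.closedBall 0 (h * L),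
      y ≤ F (a + v) + 2 * M * (h * L) ^ 2 := by
    rintro _ ⟨u, hu, rfl⟩
    have hu : ‖u‖ ≤ h * L := by simpa using hu
    have h1 := (abs_le.mp (abs_taylor_one_le hF hM hM2 a u hu)).2
    have h2 := (abs_le.mp (abs_taylor_one_le hF hM hM2 a v hvn.le)).1
    have h3 : fderiv ℝ F a u ≤ ‖gradient F a‖ * (h * L) := by
      rw [hgrad]
      exact (real_inner_le_norm _ _).trans (by gcongr)
    rw [hDv] at h2
    dsimp only
    linarith
  have hmem : F (a + v) ∈ (fun u => F (a + u)) '' Metric.closedBall 0 (h * L) :=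
    ⟨v, by simpa using hvn.le, rfl⟩
  refine ⟨sub_nonneg.mpr (le_csSup ⟨_, hle⟩ hmem), ?_⟩
  have := csSup_le ⟨_, hmem⟩ hle
  nlinarith [sq_nonneg h]
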